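/- arXiv:1906.06970 — 2 statements merged into one kernel-verified Lean document; each statement's English description precedes it below -/
import Mathlib

section
/- Let X, U, W be finite sets and let p_{XUW} be a pmf on X×U×W with marginal/conditional decomposition determined by p_U, p_{X|UW}. If H(U) > I(X; U,W), then there exists a sequence of maps a_n : U^n → W^n such that, defining for each n the pmf p_{X^n}(x^n) = Σ_{u^n ∈ U^n} ( ∏_{i=1}^n p_U(u_i) ) · ( ∏_{i=1}^n p_{X|UW}(x_i | u_i, (a_n(u^n))_i ) ), one has lim_{n→∞} D( p_{X^n} ‖ p_X^{⊗n} ) = 0, where p_X is the X-marginal of p_{XUW}. -/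
open Finset

/-- A probability mass function on a finite alphabet. -/
def IsPMF {α : Type*} [Fintype α] (p : α → ℝ) : Prop :=
  (∀ a, 0 ≤ p a) ∧ ∑ a, p a = 1

/-- KL divergence in bits (finite-alphabet sum form, convention `0 · log 0 = 0`). -/
noncomputable def klDiv {α : Type*} [Fintype α] (p q : α → ℝ) : ℝ :=
  ∑ a, p a * Real.logb 2 (p a / q a)

/-- Shannon entropy in bits. -/
noncomputable def ent {α : Type*} [Fintype α] (p : α → ℝ) : ℝ :=
  -∑ a, p a * Real.logb 2 (p a)

/-! Random coding: draw the values `f a` of an encoder independently from `κ a`. Conditionally on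
`f a`, the other codewords contribute to the output at `c` at most its overall mean, so linearising
the logarithm around that mean bounds the expected divergence by the mean of
`log (1 + v a b c / averageOutput κ v c)`, hence, up to a constant, by the mean of
`(v a b c / averageOutput κ v c) ^ s` for every `0 < s ≤ 1`. For product alphabets the latter is an
`n`-th power. Its base equals `1` at `s = 0` and has derivative proportional to
`I(X; U, W) - H(U) < 0` there, so it is less than `1` for small `s`, and the best encoder is
exponentially good. -/

namespace SoftCovering

section Products

variable {ι α β γ R : Type*} [CommSemiring R] [Fintype ι] [DecidableEq ι] [Fintype α]
  [Fintype β] [Fintype γ]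

theorem sum_prod_apply (F : ι → α → R) : ∑ f : ι → α, ∏ i, F i (f i) = ∏ i, ∑ x, F i x := by
  rw [← sum_prod_piFinset, Fintype.piFinset_univ]

theorem sum_sum_prod_apply (F : ι → α → β → R) :
    ∑ f : ι → α, ∑ g : ι → β, ∏ i, F i (f i) (g i) = ∏ i, ∑ x, ∑ y, F i x y := by
  rw [← sum_prod_apply fun i x => ∑ y, F i x y]
  exact sum_congr rfl fun f _ => sum_prod_apply fun i y => F i (f i) y

theorem sum_sum_sum_prod_apply (F : ι → α → β → γ → R) :
    ∑ f : ι → α, ∑ g : ι → β, ∑ h : ι → γ, ∏ i, F i (f i) (g i) (h i) =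
      ∏ i, ∑ x, ∑ y, ∑ z, F i x y z := by
  rw [← sum_prod_apply fun i x => ∑ y, ∑ z, F i x y z]
  exact sum_congr rfl fun f _ => sum_sum_prod_apply fun i => F i (f i)

theorem isPMF_prod_apply {p : ι → α → ℝ} (hp : ∀ i, IsPMF (p i)) :
    IsPMF fun f : ι → α => ∏ i, p i (f i) := by
  refine ⟨fun f => prod_nonneg fun i _ => (hp i).1 _, ?_⟩
  rw [sum_prod_apply, prod_eq_one fun i _ => (hp i).2]

theorem sum_prod_mul_prod_apply {p : ι → α → R} (hp : ∀ i, ∑ x, p i x = 1) (s : Finset ι)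
    (g : ι → α → R) :
    ∑ f : ι → α, (∏ i, p i (f i)) * ∏ i ∈ s, g i (f i) = ∏ i ∈ s, ∑ x, p i x * g i x := by
  calc ∑ f : ι → α, (∏ i, p i (f i)) * ∏ i ∈ s, g i (f i)
      = ∑ f : ι → α, ∏ i, p i (f i) * if i ∈ s then g i (f i) else 1 := by
        simp only [prod_mul_distrib, Fintype.prod_ite_mem]
    _ = ∏ i, ∑ x, p i x * if i ∈ s then g i x else 1 :=
        sum_prod_apply fun i x => p i x * if i ∈ s then g i x else 1
    _ = ∏ i, if i ∈ s then ∑ x, p i x * g i x else 1 := by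
        refine prod_congr rfl fun i _ => ?_
        split_ifs
        · rfl
        · simp only [mul_one, hp]
    _ = ∏ i ∈ s, ∑ x, p i x * g i x := Fintype.prod_ite_mem _ _

theorem sum_prod_mul_apply {p : ι → α → R} (hp : ∀ i, ∑ x, p i x = 1) (i : ι) (g : α → R) :
    ∑ f : ι → α, (∏ i, p i (f i)) * g (f i) = ∑ x, p i x * g x := by
  simpa only [prod_singleton] using sum_prod_mul_prod_apply hp {i} fun _ => g

theorem sum_prod_mul_apply_mul_apply {p : ι → α → R} (hp : ∀ i, ∑ x, p i x = 1) {i j : ι}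
    (hij : i ≠ j) (g h : α → R) :
    ∑ f : ι → α, (∏ i, p i (f i)) * (g (f i) * h (f j)) =
      (∑ x, p i x * g x) * ∑ x, p j x * h x := by
  simpa only [prod_pair hij, if_true, if_neg hij.symm] using
    sum_prod_mul_prod_apply hp {i, j} fun k => if k = i then g else h

end Products

section WeightedSums

variable {α : Type*} [Fintype α]

theorem exists_pos_and_le_of_sum_mul_le {p g : α → ℝ} {R : ℝ} (hp : IsPMF p)
    (h : ∑ x, p x * g x ≤ R) : ∃ x, 0 < p x ∧ g x ≤ R := by
  by_contra! hlt
  have hle : ∀ x, p x * R ≤ p x * g x := fun x => by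
    rcases (hp.1 x).eq_or_lt with h0 | hpos
    · simp only [← h0, zero_mul, le_refl]
    · exact mul_le_mul_of_nonneg_left (hlt x hpos).le hpos.le
  obtain ⟨x, -, hx⟩ : ∃ x ∈ univ, 0 < p x :=
    exists_lt_of_sum_lt (f := fun _ => (0 : ℝ)) (by simp only [sum_const_zero, hp.2, zero_lt_one])
  have : ∑ x, p x * R < ∑ x, p x * g x :=
    sum_lt_sum (fun x _ => hle x) ⟨x, mem_univ x, mul_lt_mul_of_pos_left (hlt x hx) hx⟩
  rw [← sum_mul, hp.2, one_mul] at this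
  exact this.not_ge h

theorem le_sum_sum {β : Type*} [Fintype β] {f : α → β → ℝ} (hf : ∀ x y, 0 ≤ f x y) (x : α) (y : β) :
    f x y ≤ ∑ x, ∑ y, f x y :=
  calc f x y ≤ ∑ y, f x y := single_le_sum (fun y _ => hf x y) (mem_univ y)
    _ ≤ ∑ x, ∑ y, f x y :=
      single_le_sum (f := fun x => ∑ y, f x y) (fun x _ => sum_nonneg fun y _ => hf x y)
        (mem_univ x)

theorem exists_sum_mul_rpow_lt_one {p z : α → ℝ} (hp : ∑ x, p x = 1)
    (hz : ∀ x, p x ≠ 0 → 0 < z x) (hneg : ∑ x, p x * Real.log (z x) < 0) :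
    ∃ s : ℝ, 0 < s ∧ s ≤ 1 ∧ ∑ x, p x * z x ^ s < 1 := by
  have hderiv : HasDerivAt (fun s : ℝ => ∑ x, p x * z x ^ s) (∑ x, p x * Real.log (z x)) 0 := by
    refine HasDerivAt.fun_sum fun x _ => ?_
    by_cases h : p x = 0
    · simpa only [h, zero_mul] using hasDerivAt_const (0 : ℝ) (0 : ℝ)
    · simpa using ((hasDerivAt_id (0 : ℝ)).const_rpow (hz x h)).const_mul (p x)
  have hslope := (hasDerivAt_iff_tendsto_slope.1 hderiv).mono_left
    (nhdsWithin_mono 0 fun s (hs : s ∈ Set.Ioi 0) => ne_of_gt hs)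
  obtain ⟨s, hs, hs0, hs1⟩ := ((hslope.eventually_lt_const hneg).and
    (Ioc_mem_nhdsGT zero_lt_one)).exists
  refine ⟨s, hs0, hs1, ?_⟩
  rw [slope_def_field, div_lt_iff₀ (by simpa only [sub_zero] using hs0)] at hs
  simpa only [Real.rpow_zero, mul_one, hp, zero_mul, sub_neg] using hs

theorem klDiv_nonneg {p q : α → ℝ} (hp : ∀ x, 0 ≤ p x) (hq : ∀ x, 0 ≤ q x)
    (hac : ∀ x, q x = 0 → p x = 0) (hpq : ∑ x, q x ≤ ∑ x, p x) : 0 ≤ klDiv p q := by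
  have hlog2 : 0 < Real.log 2 := Real.log_pos one_lt_two
  have hterm : ∀ x, (p x - q x) / Real.log 2 ≤ p x * Real.logb 2 (p x / q x) := fun x => by
    rw [Real.logb, ← mul_div_assoc]
    refine div_le_div_of_nonneg_right ?_ hlog2.le
    rcases (hq x).eq_or_lt with h0 | hpos
    · simp only [← h0, hac x h0.symm, sub_zero, zero_mul, le_refl]
    · calc p x - q x = q x * (p x / q x - 1) := by field_simp
        _ ≤ q x * (p x / q x * Real.log (p x / q x)) :=
          mul_le_mul_of_nonneg_left (Real.self_sub_one_le_mul_log (div_nonneg (hp x) hpos.le))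
            hpos.le
        _ = p x * Real.log (p x / q x) := by field_simp
  calc (0 : ℝ) ≤ (∑ x, p x - ∑ x, q x) / Real.log 2 := div_nonneg (sub_nonneg.2 hpq) hlog2.le
    _ = ∑ x, (p x - q x) / Real.log 2 := by rw [← sum_div, sum_sub_distrib]
    _ ≤ klDiv p q := sum_le_sum fun x _ => hterm x

end WeightedSums

section Logarithms

theorem logb_one_add_le_rpow_div {b z s : ℝ} (hb : 1 < b) (hz : 0 ≤ z) (hs0 : 0 < s)
    (hs1 : s ≤ 1) :
    Real.logb b (1 + z) ≤ z ^ s / (s * Real.log b) := by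
  have hsub : (1 + z) ^ s ≤ 1 + z ^ s := by
    simpa only [Real.one_rpow] using Real.rpow_add_le_add_rpow zero_le_one hz hs0.le hs1
  have hlog : s * Real.log (1 + z) ≤ z ^ s := by
    rw [← Real.log_rpow (by positivity)]
    linarith [Real.log_le_sub_one_of_pos (show 0 < (1 + z) ^ s by positivity)]
  rw [Real.logb, ← div_div]
  refine div_le_div_of_nonneg_right ?_ (Real.log_pos hb).le
  rwa [le_div_iff₀' hs0]

theorem logb_add_div_le {b v S q : ℝ} (hb : 1 < b) (hv : 0 < v) (hS : 0 ≤ S) (hq : 0 < q) :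
    Real.logb b ((v + S) / q) ≤
      Real.logb b (1 + v / q) + (S - q) / (v + q) / Real.log b := by
  have hfactor : (v + S) / q = (1 + v / q) * ((v + S) / (v + q)) := by field_simp; ring
  have hratio : (v + S) / (v + q) - 1 = (S - q) / (v + q) := by field_simp; ring
  rw [hfactor, Real.logb_mul (by positivity) (by positivity), ← hratio]
  gcongr
  exact div_le_div_of_nonneg_right (Real.log_le_sub_one_of_pos (by positivity))
    (Real.log_pos hb).le

theorem mul_logb_mul_div_eq {b p q r t y : ℝ} (hp : p = q * y) (hr : p ≠ 0 → r ≠ 0)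
    (ht : p ≠ 0 → t ≠ 0) :
    p * Real.logb b (r * y / t) =
      p * Real.logb b r + p * Real.logb b p - p * Real.logb b q - p * Real.logb b t := by
  by_cases hp0 : p = 0
  · simp only [hp0, zero_mul, add_zero, sub_zero]
  have hqy : q * y ≠ 0 := hp ▸ hp0
  have hq := left_ne_zero_of_mul hqy
  have hy := right_ne_zero_of_mul hqy
  have hlogp : Real.logb b p = Real.logb b q + Real.logb b y := by rw [hp, Real.logb_mul hq hy]
  rw [Real.logb_div (mul_ne_zero (hr hp0) hy) (ht hp0), Real.logb_mul (hr hp0) hy, hlogp]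
  ring

end Logarithms

section OneShot

variable {A B C : Type*} [Fintype A] {κ : A → B → ℝ} {v : A → B → C → ℝ}

/-- The output distribution produced by the encoder `f`. Here `v a b c` is the joint weight of the
source symbol `a` and the output `c` when `a` is encoded as `b`, that is, the source probability of
`a` times the channel probability of `c` given `(a, b)`. -/
def inducedOutput (v : A → B → C → ℝ) (f : A → B) (c : C) : ℝ :=
  ∑ a, v a (f a) c

/-- The mean of `inducedOutput v f` over random encoders `f` with `f a` of law `κ a`: the target
distribution of soft covering. -/
def averageOutput [Fintype B] (κ : A → B → ℝ) (v : A → B → C → ℝ) (c : C) : ℝ :=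
  ∑ a, ∑ b, κ a b * v a b c

theorem inducedOutput_nonneg (hv : ∀ a b c, 0 ≤ v a b c) (f : A → B) (c : C) :
    0 ≤ inducedOutput v f c :=
  sum_nonneg fun _ _ => hv _ _ _

theorem sum_inducedOutput [Fintype C] {μ : A → ℝ} (hμ : ∀ a b, ∑ c, v a b c = μ a)
    (f : A → B) : ∑ c, inducedOutput v f c = ∑ a, μ a := by
  simp only [inducedOutput]
  rw [sum_comm]
  exact sum_congr rfl fun a _ => hμ a (f a)

variable [Fintype B]

theorem averageOutput_nonneg (hκ : ∀ a b, 0 ≤ κ a b) (hv : ∀ a b c, 0 ≤ v a b c) (c : C) :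
    0 ≤ averageOutput κ v c :=
  sum_nonneg fun _ _ => sum_nonneg fun _ _ => mul_nonneg (hκ _ _) (hv _ _ _)

theorem sum_sum_sum_mul_eq_sum [Fintype C] {μ : A → ℝ} (hκ : ∀ a, ∑ b, κ a b = 1)
    (hμ : ∀ a b, ∑ c, v a b c = μ a) : ∑ a, ∑ b, ∑ c, κ a b * v a b c = ∑ a, μ a := by
  simp only [← mul_sum, hμ, ← sum_mul, hκ, one_mul]

theorem sum_averageOutput [Fintype C] {μ : A → ℝ} (hκ : ∀ a, ∑ b, κ a b = 1)
    (hμ : ∀ a b, ∑ c, v a b c = μ a) : ∑ c, averageOutput κ v c = ∑ a, μ a := by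
  rw [← sum_sum_sum_mul_eq_sum hκ hμ]
  simp only [averageOutput]
  rw [sum_comm]
  exact sum_congr rfl fun a _ => sum_comm

theorem mul_le_averageOutput (hκ : ∀ a b, 0 ≤ κ a b) (hv : ∀ a b c, 0 ≤ v a b c)
    (a : A) (b : B) (c : C) : κ a b * v a b c ≤ averageOutput κ v c :=
  le_sum_sum (f := fun a b => κ a b * v a b c) (fun a b => mul_nonneg (hκ a b) (hv a b c)) a b

theorem inducedOutput_eq_zero_of_averageOutput_eq_zero (hκ : ∀ a b, 0 ≤ κ a b)
    (hv : ∀ a b c, 0 ≤ v a b c) {f : A → B} (hf : ∀ a, 0 < κ a (f a)) {c : C}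
    (hc : averageOutput κ v c = 0) : inducedOutput v f c = 0 := by
  refine sum_eq_zero fun a _ => (hv a (f a) c).antisymm' ?_
  refine nonpos_of_mul_nonpos_right ?_ (hf a)
  exact (mul_le_averageOutput hκ hv a (f a) c).trans hc.le

section RandomEncoder

variable [DecidableEq A]

theorem mul_logb_inducedOutput_le (hκ : ∀ a b, 0 ≤ κ a b)
    (hv : ∀ a b c, 0 ≤ v a b c) {f : A → B} {a : A} (hf : 0 < κ a (f a)) (c : C) :
    v a (f a) c * Real.logb 2 (inducedOutput v f c / averageOutput κ v c) ≤
      v a (f a) c * Real.logb 2 (1 + v a (f a) c / averageOutput κ v c) +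
        v a (f a) c / (v a (f a) c + averageOutput κ v c) *
          (∑ a' ∈ univ.erase a, v a' (f a') c - averageOutput κ v c) / Real.log 2 := by
  rcases (hv a (f a) c).eq_or_lt with h0 | hpos
  · simp only [← h0, zero_mul, zero_div, add_zero, le_refl]
  have hq : 0 < averageOutput κ v c :=
    (mul_pos hf hpos).trans_le (mul_le_averageOutput hκ hv a (f a) c)
  have hsplit : inducedOutput v f c = v a (f a) c + ∑ a' ∈ univ.erase a, v a' (f a') c :=
    (add_sum_erase univ (fun a => v a (f a) c) (mem_univ a)).symm
  have hothers : 0 ≤ ∑ a' ∈ univ.erase a, v a' (f a') c := sum_nonneg fun a' _ => hv _ _ _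
  rw [hsplit]
  refine (mul_le_mul_of_nonneg_left
    (logb_add_div_le one_lt_two hpos hothers hq) hpos.le).trans_eq ?_
  ring

theorem sum_prod_mul_sum_erase_le (hκ : ∀ a, IsPMF (κ a)) (hv : ∀ a b c, 0 ≤ v a b c)
    {h : B → ℝ} (hh : ∀ b, 0 ≤ h b) (a : A) (c : C) :
    ∑ f : A → B, (∏ x, κ x (f x)) * (h (f a) * ∑ a' ∈ univ.erase a, v a' (f a') c) ≤
      (∑ b, κ a b * h b) * averageOutput κ v c := by
  have hmean : 0 ≤ ∑ b, κ a b * h b := sum_nonneg fun b _ => mul_nonneg ((hκ a).1 b) (hh b)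
  have hnonneg : ∀ a', 0 ≤ ∑ b, κ a' b * v a' b c := fun a' =>
    sum_nonneg fun b _ => mul_nonneg ((hκ a').1 b) (hv a' b c)
  calc ∑ f : A → B, (∏ x, κ x (f x)) * (h (f a) * ∑ a' ∈ univ.erase a, v a' (f a') c)
      = ∑ a' ∈ univ.erase a,
          ∑ f : A → B, (∏ x, κ x (f x)) * (h (f a) * v a' (f a') c) := by
        simp only [mul_sum]
        exact sum_comm
    _ = ∑ a' ∈ univ.erase a, (∑ b, κ a b * h b) * ∑ b, κ a' b * v a' b c :=
        sum_congr rfl fun a' ha' => sum_prod_mul_apply_mul_apply (fun x => (hκ x).2)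
          (ne_of_mem_erase ha').symm h fun b => v a' b c
    _ = (∑ b, κ a b * h b) * ∑ a' ∈ univ.erase a, ∑ b, κ a' b * v a' b c := by rw [mul_sum]
    _ ≤ (∑ b, κ a b * h b) * averageOutput κ v c :=
        mul_le_mul_of_nonneg_left
          (sum_le_sum_of_subset_of_nonneg (subset_univ _) fun a' _ _ => hnonneg a') hmean

theorem sum_prod_mul_logb_inducedOutput_le (hκ : ∀ a, IsPMF (κ a))
    (hv : ∀ a b c, 0 ≤ v a b c) (a : A) (c : C) :
    ∑ f : A → B, (∏ x, κ x (f x)) *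
        (v a (f a) c * Real.logb 2 (inducedOutput v f c / averageOutput κ v c)) ≤
      ∑ b, κ a b * (v a b c * Real.logb 2 (1 + v a b c / averageOutput κ v c)) := by
  have hκ0 : ∀ a b, 0 ≤ κ a b := fun a => (hκ a).1
  have hκ1 : ∀ a, ∑ b, κ a b = 1 := fun a => (hκ a).2
  set q := averageOutput κ v c
  set g : B → ℝ := fun b => v a b c * Real.logb 2 (1 + v a b c / q)
  set h : B → ℝ := fun b => v a b c / (v a b c + q)
  set S : (A → B) → ℝ := fun f => ∑ a' ∈ univ.erase a, v a' (f a') c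
  have hh : ∀ b, 0 ≤ h b := fun b =>
    div_nonneg (hv a b c) (add_nonneg (hv a b c) (averageOutput_nonneg hκ0 hv c))
  have hpointwise : ∀ f : A → B,
      (∏ x, κ x (f x)) * (v a (f a) c * Real.logb 2 (inducedOutput v f c / q)) ≤
        (∏ x, κ x (f x)) * (g (f a) + h (f a) * (S f - q) / Real.log 2) := fun f => by
    by_cases hzero : ∏ x, κ x (f x) = 0
    · simp only [hzero, zero_mul, le_refl]
    · have hf : 0 < κ a (f a) :=
        (hκ0 a (f a)).lt_of_ne' (prod_ne_zero_iff.1 hzero a (mem_univ a))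
      exact mul_le_mul_of_nonneg_left (mul_logb_inducedOutput_le hκ0 hv hf c)
        (prod_nonneg fun x _ => hκ0 x (f x))
  calc ∑ f : A → B, (∏ x, κ x (f x)) *
        (v a (f a) c * Real.logb 2 (inducedOutput v f c / q))
      ≤ ∑ f : A → B, (∏ x, κ x (f x)) * (g (f a) + h (f a) * (S f - q) / Real.log 2) :=
        sum_le_sum fun f _ => hpointwise f
    _ = ∑ f : A → B, (∏ x, κ x (f x)) * g (f a) +
          (∑ f : A → B, (∏ x, κ x (f x)) * (h (f a) * S f) -
            (∑ f : A → B, (∏ x, κ x (f x)) * h (f a)) * q) / Real.log 2 := by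
        rw [sum_mul, ← sum_sub_distrib, sum_div, ← sum_add_distrib]
        exact sum_congr rfl fun f _ => by ring
    _ ≤ ∑ f : A → B, (∏ x, κ x (f x)) * g (f a) := by
        refine add_le_of_nonpos_right (div_nonpos_of_nonpos_of_nonneg ?_
          (Real.log_pos one_lt_two).le)
        rw [sub_nonpos, sum_prod_mul_apply hκ1]
        exact sum_prod_mul_sum_erase_le hκ hv hh a c
    _ = ∑ b, κ a b * g b := sum_prod_mul_apply hκ1 a g

variable [Fintype C]

theorem sum_prod_mul_klDiv_inducedOutput_le (hκ : ∀ a, IsPMF (κ a))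
    (hv : ∀ a b c, 0 ≤ v a b c) :
    ∑ f : A → B, (∏ x, κ x (f x)) * klDiv (inducedOutput v f) (averageOutput κ v) ≤
      ∑ a, ∑ b, ∑ c, κ a b * (v a b c * Real.logb 2 (1 + v a b c / averageOutput κ v c)) := by
  calc ∑ f : A → B, (∏ x, κ x (f x)) * klDiv (inducedOutput v f) (averageOutput κ v)
      = ∑ f : A → B, ∑ a, ∑ c, (∏ x, κ x (f x)) *
          (v a (f a) c * Real.logb 2 (inducedOutput v f c / averageOutput κ v c)) := by
        refine sum_congr rfl fun f _ => ?_
        rw [klDiv, sum_comm]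
        simp only [← mul_sum, ← sum_mul]
        rfl
    _ = ∑ a, ∑ c, ∑ f : A → B, (∏ x, κ x (f x)) *
          (v a (f a) c * Real.logb 2 (inducedOutput v f c / averageOutput κ v c)) := by
        rw [sum_comm]
        exact sum_congr rfl fun a _ => sum_comm
    _ ≤ ∑ a, ∑ c, ∑ b, κ a b *
          (v a b c * Real.logb 2 (1 + v a b c / averageOutput κ v c)) :=
        sum_le_sum fun a _ => sum_le_sum fun c _ =>
          sum_prod_mul_logb_inducedOutput_le hκ hv a c
    _ = ∑ a, ∑ b, ∑ c, κ a b *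
          (v a b c * Real.logb 2 (1 + v a b c / averageOutput κ v c)) :=
        sum_congr rfl fun a _ => sum_comm

end RandomEncoder

variable [Fintype C]

/-- The moment of order `s` of `v a b c / averageOutput κ v c`, the exponential of the information
density less the self-information of the source symbol, under the joint weight
`κ a b * v a b c`. -/
noncomputable def densityMoment (κ : A → B → ℝ) (v : A → B → C → ℝ) (s : ℝ) : ℝ :=
  ∑ a, ∑ b, ∑ c, κ a b * v a b c * (v a b c / averageOutput κ v c) ^ s

theorem densityMoment_nonneg (hκ : ∀ a b, 0 ≤ κ a b) (hv : ∀ a b c, 0 ≤ v a b c) (s : ℝ) :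
    0 ≤ densityMoment κ v s :=
  sum_nonneg fun a _ => sum_nonneg fun b _ => sum_nonneg fun c _ =>
    mul_nonneg (mul_nonneg (hκ a b) (hv a b c))
      (Real.rpow_nonneg (div_nonneg (hv a b c) (averageOutput_nonneg hκ hv c)) s)

theorem sum_mul_logb_one_add_le_densityMoment (hκ : ∀ a b, 0 ≤ κ a b)
    (hv : ∀ a b c, 0 ≤ v a b c) {s : ℝ} (hs0 : 0 < s) (hs1 : s ≤ 1) :
    ∑ a, ∑ b, ∑ c, κ a b * (v a b c * Real.logb 2 (1 + v a b c / averageOutput κ v c)) ≤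
      densityMoment κ v s / (s * Real.log 2) := by
  simp only [densityMoment, sum_div]
  gcongr with a _ b _ c _
  rw [← mul_assoc, mul_div_assoc]
  exact mul_le_mul_of_nonneg_left
    (logb_one_add_le_rpow_div one_lt_two
      (div_nonneg (hv a b c) (averageOutput_nonneg hκ hv c)) hs0 hs1)
    (mul_nonneg (hκ a b) (hv a b c))

theorem exists_klDiv_inducedOutput_le (hκ : ∀ a, IsPMF (κ a)) (hv : ∀ a b c, 0 ≤ v a b c)
    {μ : A → ℝ} (hμ : ∀ a b, ∑ c, v a b c = μ a) {s : ℝ} (hs0 : 0 < s) (hs1 : s ≤ 1) :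
    ∃ f : A → B, 0 ≤ klDiv (inducedOutput v f) (averageOutput κ v) ∧
      klDiv (inducedOutput v f) (averageOutput κ v) ≤
        densityMoment κ v s / (s * Real.log 2) := by
  classical
  have hκ0 : ∀ a b, 0 ≤ κ a b := fun a => (hκ a).1
  obtain ⟨f, hf, hle⟩ := exists_pos_and_le_of_sum_mul_le (isPMF_prod_apply hκ)
    ((sum_prod_mul_klDiv_inducedOutput_le hκ hv).trans
      (sum_mul_logb_one_add_le_densityMoment hκ0 hv hs0 hs1))
  have hsupp : ∀ a, 0 < κ a (f a) := fun a =>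
    (hκ0 a (f a)).lt_of_ne' (prod_ne_zero_iff.1 hf.ne' a (mem_univ a))
  refine ⟨f, klDiv_nonneg (inducedOutput_nonneg hv f) (averageOutput_nonneg hκ0 hv)
    (fun c => inducedOutput_eq_zero_of_averageOutput_eq_zero hκ0 hv hsupp) ?_, hle⟩
  rw [sum_averageOutput (fun a => (hκ a).2) hμ, sum_inducedOutput hμ]

end OneShot

section Blocks

variable {ι A B C : Type*} [Fintype ι] [DecidableEq ι] [Fintype A] [Fintype B]
  {κ : A → B → ℝ} {v : A → B → C → ℝ}

theorem averageOutput_prod_apply (κ : A → B → ℝ) (v : A → B → C → ℝ) (z : ι → C) :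
    averageOutput (fun (x : ι → A) (y : ι → B) => ∏ i, κ (x i) (y i))
      (fun x y z => ∏ i, v (x i) (y i) (z i)) z = ∏ i, averageOutput κ v (z i) := by
  simp only [averageOutput, ← prod_mul_distrib]
  exact sum_sum_prod_apply fun i a b => κ a b * v a b (z i)

variable [Fintype C]

theorem densityMoment_prod_apply (hκ : ∀ a b, 0 ≤ κ a b) (hv : ∀ a b c, 0 ≤ v a b c) (s : ℝ) :
    densityMoment (fun (x : ι → A) (y : ι → B) => ∏ i, κ (x i) (y i))
      (fun x y (z : ι → C) => ∏ i, v (x i) (y i) (z i)) s =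
        densityMoment κ v s ^ Fintype.card ι := by
  have hratio : ∀ a b c, 0 ≤ v a b c / averageOutput κ v c := fun a b c =>
    div_nonneg (hv a b c) (averageOutput_nonneg hκ hv c)
  simp only [densityMoment, averageOutput_prod_apply, ← prod_div_distrib,
    ← Real.finsetProd_rpow _ _ fun _ _ => hratio _ _ _, ← prod_mul_distrib]
  rw [sum_sum_sum_prod_apply fun (_ : ι) a b c =>
    κ a b * v a b c * (v a b c / averageOutput κ v c) ^ s, prod_const, card_univ]

theorem exists_densityMoment_lt_one (hκ : ∀ a, IsPMF (κ a)) (hv : ∀ a b c, 0 ≤ v a b c)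
    {μ : A → ℝ} (hμ : ∀ a b, ∑ c, v a b c = μ a) (hμ1 : ∑ a, μ a = 1)
    (hneg : ∑ a, ∑ b, ∑ c, κ a b * v a b c * Real.logb 2 (v a b c / averageOutput κ v c) < 0) :
    ∃ s : ℝ, 0 < s ∧ s ≤ 1 ∧ densityMoment κ v s < 1 := by
  have hκ0 : ∀ a b, 0 ≤ κ a b := fun a => (hκ a).1
  have hpos : ∀ t : A × B × C, κ t.1 t.2.1 * v t.1 t.2.1 t.2.2 ≠ 0 →
      0 < v t.1 t.2.1 t.2.2 / averageOutput κ v t.2.2 := fun t ht =>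
    div_pos ((hv _ _ _).lt_of_ne' (right_ne_zero_of_mul ht))
      (((mul_nonneg (hκ0 _ _) (hv _ _ _)).lt_of_ne' ht).trans_le
        (mul_le_averageOutput hκ0 hv _ _ _))
  simp only [Real.logb, ← mul_div_assoc, ← sum_div] at hneg
  have hneg' := neg_of_div_neg_left hneg (Real.log_pos one_lt_two).le
  have hmoment := exists_sum_mul_rpow_lt_one
    (p := fun t : A × B × C => κ t.1 t.2.1 * v t.1 t.2.1 t.2.2)
    (by simp only [Fintype.sum_prod_type, sum_sum_sum_mul_eq_sum (fun a => (hκ a).2) hμ, hμ1]) hpos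
    (by simpa only [Fintype.sum_prod_type] using hneg')
  simpa only [Fintype.sum_prod_type, densityMoment] using hmoment

theorem exists_klDiv_inducedOutput_prod_le_pow (hκ : ∀ a, IsPMF (κ a))
    (hv : ∀ a b c, 0 ≤ v a b c) {μ : A → ℝ} (hμ : ∀ a b, ∑ c, v a b c = μ a)
    (hμ1 : ∑ a, μ a = 1)
    (hneg : ∑ a, ∑ b, ∑ c, κ a b * v a b c * Real.logb 2 (v a b c / averageOutput κ v c) < 0) :
    ∃ ρ K : ℝ, 0 ≤ ρ ∧ ρ < 1 ∧ ∀ n : ℕ, ∃ f : (Fin n → A) → Fin n → B,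
      let D := klDiv (inducedOutput (fun x y (z : Fin n → C) => ∏ i, v (x i) (y i) (z i)) f)
        (fun z => ∏ i, averageOutput κ v (z i))
      0 ≤ D ∧ D ≤ ρ ^ n / K := by
  have hκ0 : ∀ a b, 0 ≤ κ a b := fun a => (hκ a).1
  obtain ⟨s, hs0, hs1, hs⟩ := exists_densityMoment_lt_one hκ hv hμ hμ1 hneg
  refine ⟨densityMoment κ v s, s * Real.log 2, densityMoment_nonneg hκ0 hv s, hs, fun n => ?_⟩
  have hblock : ∀ (x : Fin n → A) (y : Fin n → B),
      ∑ z : Fin n → C, ∏ i, v (x i) (y i) (z i) = ∏ i, μ (x i) := fun x y => by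
    rw [sum_prod_apply fun i => v (x i) (y i)]
    exact prod_congr rfl fun i _ => hμ _ _
  obtain ⟨f, hf⟩ := exists_klDiv_inducedOutput_le
    (κ := fun (x : Fin n → A) (y : Fin n → B) => ∏ i, κ (x i) (y i))
    (fun x => isPMF_prod_apply fun i => hκ (x i))
    (fun x y z => prod_nonneg fun i _ => hv (x i) (y i) (z i)) hblock hs0 hs1
  rw [densityMoment_prod_apply hκ0 hv, Fintype.card_fin,
    funext (averageOutput_prod_apply (ι := Fin n) κ v)] at hf
  exact ⟨f, hf⟩

end Blocks

section SingleLetter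

variable {X U W : Type*} [Fintype W]

theorem exists_conditional_isPMF [Nonempty W] {Q : U → W → ℝ} (hQ : ∀ u w, 0 ≤ Q u w) :
    ∃ κ : U → W → ℝ, (∀ u, IsPMF (κ u)) ∧ ∀ u w, κ u w * ∑ w', Q u w' = Q u w := by
  suffices h : ∀ u, ∃ p : W → ℝ, IsPMF p ∧ ∀ w, p w * ∑ w', Q u w' = Q u w by
    choose κ hκ hκQ using h
    exact ⟨κ, hκ, hκQ⟩
  intro u
  by_cases hzero : ∑ w, Q u w = 0
  · have hQ0 : ∀ w, Q u w = 0 := fun w =>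
      (sum_eq_zero_iff_of_nonneg fun w _ => hQ u w).1 hzero w (mem_univ w)
    refine ⟨fun _ => (Fintype.card W : ℝ)⁻¹, ⟨fun _ => by positivity, ?_⟩, fun w => ?_⟩
    · simp
    · rw [hzero, mul_zero, hQ0]
  · refine ⟨fun w => Q u w / ∑ w', Q u w',
      ⟨fun w => div_nonneg (hQ u w) (sum_nonneg fun w' _ => hQ u w'), ?_⟩,
      fun w => div_mul_cancel₀ _ hzero⟩
    rw [← sum_div, div_self hzero]

variable [Fintype X] [Fintype U]

theorem sum_mul_logb_eq_ent {P : X × U × W → ℝ} (hP : ∀ t, 0 ≤ P t) {pU : U → ℝ}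
    (hpU : ∀ u, pU u = ∑ x, ∑ w, P (x, u, w)) {pX : X → ℝ}
    (hpX : ∀ x, pX x = ∑ u, ∑ w, P (x, u, w)) {V : U → W → X → ℝ}
    (hV : ∀ x u w, P (x, u, w) = (∑ x', P (x', u, w)) * V u w x) :
    ∑ u, ∑ w, ∑ x, P (x, u, w) * Real.logb 2 (pU u * V u w x / pX x) =
      ent pX + ent (fun uw : U × W => ∑ x, P (x, uw.1, uw.2)) - ent P - ent pU := by
  set Q : U × W → ℝ := fun uw => ∑ x, P (x, uw.1, uw.2)
  have hterm : ∀ t : X × U × W,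
      P t * Real.logb 2 (pU t.2.1 * V t.2.1 t.2.2 t.1 / pX t.1) =
        P t * Real.logb 2 (pU t.2.1) + P t * Real.logb 2 (P t) - P t * Real.logb 2 (Q t.2) -
          P t * Real.logb 2 (pX t.1) := by
    rintro ⟨x, u, w⟩
    refine mul_logb_mul_div_eq (hV x u w) (fun h => ?_) fun h => ?_
    · rw [hpU]
      exact (((hP _).lt_of_ne' h).trans_le
        (le_sum_sum (f := fun x w => P (x, u, w)) (fun _ _ => hP _) x w)).ne'
    · rw [hpX]
      exact (((hP _).lt_of_ne' h).trans_le
        (le_sum_sum (f := fun u w => P (x, u, w)) (fun _ _ => hP _) u w)).ne'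
  have hentU : ∑ t : X × U × W, P t * Real.logb 2 (pU t.2.1) = -ent pU := by
    simp only [ent, neg_neg, Fintype.sum_prod_type]
    rw [sum_comm]
    simp only [← sum_mul, ← hpU]
  have hentX : ∑ t : X × U × W, P t * Real.logb 2 (pX t.1) = -ent pX := by
    simp only [ent, neg_neg, Fintype.sum_prod_type, ← sum_mul, ← hpX]
  have hentQ : ∑ t : X × U × W, P t * Real.logb 2 (Q t.2) = -ent Q := by
    rw [ent, neg_neg, Fintype.sum_prod_type, sum_comm]
    simp only [← sum_mul]
    rfl
  have hentP : ∑ t, P t * Real.logb 2 (P t) = -ent P := by rw [ent, neg_neg]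
  calc ∑ u, ∑ w, ∑ x, P (x, u, w) * Real.logb 2 (pU u * V u w x / pX x)
      = ∑ t : X × U × W, P t * Real.logb 2 (pU t.2.1 * V t.2.1 t.2.2 t.1 / pX t.1) := by
        rw [Fintype.sum_prod_type_right, Fintype.sum_prod_type]
    _ = ent pX + ent Q - ent P - ent pU := by
        simp only [hterm, sum_sub_distrib, sum_add_distrib, hentU, hentX, hentQ, hentP]
        ring

end SingleLetter

end SoftCovering

/-- soft-covering lemma, Lemma VII.9 of Cuff: if `H(U) > I(X;U,W)`, there is
a sequence of encodings `a_n : U^n → W^n` such that the output distribution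
`p_{X^n}(x^n) = Σ_{u^n} p_U^{⊗n}(u^n) ∏_i p_{X|UW}(x_i | u_i, a_n(u^n)_i)` converges to
`p_X^{⊗n}` in KL divergence. -/
theorem stmt14
    {X U W : Type} [Fintype X] [Fintype U] [Fintype W]
    (P : X × U × W → ℝ) (hP : IsPMF P)
    (pU : U → ℝ) (hpU : ∀ u, pU u = ∑ x, ∑ w, P (x, u, w))
    (pX : X → ℝ) (hpX : ∀ x, pX x = ∑ u, ∑ w, P (x, u, w))
    (pXgUW : U → W → X → ℝ) (hXgUW : ∀ u w, IsPMF (pXgUW u w))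
    (hdecomp : ∀ x u w, P (x, u, w) = (∑ x', P (x', u, w)) * pXgUW u w x)
    -- `I(X;U,W) = H(X) + H(U,W) - H(X,U,W) < H(U)`
    (hHI : ent pX + ent (fun uw : U × W => ∑ x, P (x, uw.1, uw.2)) - ent P < ent pU) :
    ∃ a : (n : ℕ) → (Fin n → U) → (Fin n → W),
      Filter.Tendsto
        (fun n => klDiv
          (fun xn : Fin n → X =>
            ∑ un : Fin n → U, (∏ i, pU (un i)) * ∏ i, pXgUW (un i) (a n un i) (xn i))
          (fun xn => ∏ i, pX (xn i)))
        Filter.atTop (nhds 0) := by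
  have hpU0 : ∀ u, 0 ≤ pU u := fun u => hpU u ▸ sum_nonneg fun x _ => sum_nonneg fun w _ => hP.1 _
  have hpU1 : ∑ u, pU u = 1 := by
    rw [← hP.2, Fintype.sum_prod_type, funext hpU, sum_comm]
    simp only [Fintype.sum_prod_type]
  obtain ⟨⟨-, -, w₀⟩, -⟩ := exists_ne_zero_of_sum_ne_zero (hP.2.trans_ne one_ne_zero)
  have : Nonempty W := ⟨w₀⟩
  obtain ⟨κ, hκ, hκQ⟩ := SoftCovering.exists_conditional_isPMF
    (Q := fun u w => ∑ x, P (x, u, w)) fun u w => sum_nonneg fun x _ => hP.1 _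
  have hjoint : ∀ u w x, κ u w * (pU u * pXgUW u w x) = P (x, u, w) := fun u w x => by
    rw [hdecomp, ← mul_assoc, hpU, sum_comm, hκQ]
  have htarget : SoftCovering.averageOutput κ (fun u w x => pU u * pXgUW u w x) = pX := by
    funext x
    simp only [SoftCovering.averageOutput, hjoint, hpX]
  obtain ⟨ρ, K, hρ0, hρ1, hcode⟩ := SoftCovering.exists_klDiv_inducedOutput_prod_le_pow hκ
    (fun u w x => mul_nonneg (hpU0 u) ((hXgUW u w).1 x))
    (fun u w => by rw [← mul_sum, (hXgUW u w).2, mul_one]) hpU1 (by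
      simp only [htarget, hjoint]
      rw [SoftCovering.sum_mul_logb_eq_ent hP.1 hpU hpX hdecomp]
      linarith)
  rw [htarget] at hcode
  simp only [prod_mul_distrib] at hcode
  choose a ha0 ha using hcode
  refine ⟨a, squeeze_zero ha0 ha ?_⟩
  simpa only [zero_div] using (tendsto_pow_atTop_nhds_zero_of_lt_one hρ0 hρ1).div_const K
end

section
/- Fix 0 < p < 1/2. There exist constants C₁, C₂ > 0 depending only on p such that the following holds for all n and all ε > 0. Let (U^n, V^n) ~ DSBS(p)^⊗n on {−1,1}^n × {−1,1}^n, let A and B be finite-valued random variables with A, B, (U^n,V^n) mutually independent, let X_i = f_i(U^n, A) and Y_i = g_i(V^n, B) for deterministic functions f_i, g_i with values in {−1,1}, and suppose D( p_{X^nY^n} ‖ p_{XY}^{⊗n} ) ≤ ε where p_{XY} is DSBS(p). Then Pr[ (1/n) Σ_{i=1}^n Pr( X_i ≠ Y_i | A, B ) ≤ p + C₁·ε^{1/4}·n^{−3/4}/(1−2p) ] ≥ 1 − C₂·(nε)^{1/4}, where the outer probability is over (A,B). -/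
open Finset

/-- The pmf of one DSBS(p) pair (values in the cube, encoded by `Bool`). -/
noncomputable def dsbsPair (p : ℝ) (uv : Bool × Bool) : ℝ :=
  if uv.1 = uv.2 then (1 - p) / 2 else p / 2

/-!
Put `ρ = 1 - 2p` and call `∑ i, (ρ - cov(X_i, Y_i))` the covariance deficit, bits being read as
spins `±1`. Since `U^n` and `V^n` have maximal correlation at most `ρ` (a property that tensorizes),
conditionally on `(A, B)` each summand is at least `ρ / 2` times the sum of the squared means of
`X_i` and `Y_i`; so the conditional deficit is nonnegative, and divided by `ρ` it bounds
`∑ i, (Pr(X_i ≠ Y_i) - p)`. Because `A` and `B` are independent, the law of total covariance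
identifies its mean over `(A, B)` with the unconditional deficit. The latter is the mean of
`∑ i, (ρ - X_i Y_i + X_i 𝔼[Y_i])`, a sum of functions of the single pairs which are centred and
bounded under DSBS(p), so the Donsker–Varadhan inequality and Hoeffding's lemma bound it by
`4 √(nε)`. Markov's inequality at level `(nε)^(1/4)` concludes.
-/

theorem sqrt_eq_rpow_quarter_sq {x : ℝ} (hx : 0 ≤ x) : √x = (x ^ ((1 : ℝ) / 4)) ^ 2 := by
  rw [Real.sqrt_eq_rpow, ← Real.rpow_mul_natCast hx]
  norm_num

theorem rpow_quarter_mul_rpow_neg_three_quarters {n ε : ℝ} (hn : 0 < n) (hε : 0 ≤ ε) :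
    ε ^ ((1 : ℝ) / 4) * n ^ (-(3 : ℝ) / 4) = (n * ε) ^ ((1 : ℝ) / 4) / n := by
  have hexp : n ^ (-(3 : ℝ) / 4) = n ^ ((1 : ℝ) / 4) / n := by
    rw [← Real.rpow_sub_one hn.ne']
    norm_num
  rw [hexp, Real.mul_rpow hn.le hε]
  ring

section Mean

variable {Ω Ω' : Type*} [Fintype Ω] [Fintype Ω'] {w X Y : Ω → ℝ} {c : ℝ}

/-- The expectation of `X` under the weights `w`. -/
noncomputable def mean (w X : Ω → ℝ) : ℝ := ∑ a, w a * X a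

/-- The covariance of `X` and `Y` under the weights `w`; `cov w X X` is the variance. -/
noncomputable def cov (w X Y : Ω → ℝ) : ℝ :=
  mean w (fun a => X a * Y a) - mean w X * mean w Y

/-- The probability of the event `E` under the weights `w`. -/
noncomputable def prob (w : Ω → ℝ) (E : Ω → Prop) [DecidablePred E] : ℝ :=
  mean w fun a => if E a then 1 else 0

/-- The law of an independent pair with marginals `v` and `w`. -/
def prodLaw (v : Ω → ℝ) (w : Ω' → ℝ) : Ω × Ω' → ℝ := fun z => v z.1 * w z.2

/-- The law of `T` when its argument has law `w`. -/
def mapLaw [DecidableEq Ω'] (w : Ω → ℝ) (T : Ω → Ω') : Ω' → ℝ :=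
  fun y => ∑ x, if T x = y then w x else 0

theorem mean_const (hw : IsPMF w) (c : ℝ) : mean w (fun _ => c) = c := by
  rw [mean, ← sum_mul, hw.2, one_mul]

theorem mean_add (w X Y : Ω → ℝ) : mean w (fun a => X a + Y a) = mean w X + mean w Y := by
  simp only [mean, mul_add, sum_add_distrib]

theorem mean_sub (w X Y : Ω → ℝ) : mean w (fun a => X a - Y a) = mean w X - mean w Y := by
  simp only [mean, mul_sub, sum_sub_distrib]

theorem mean_mul_const (w X : Ω → ℝ) (c : ℝ) : mean w (fun a => X a * c) = mean w X * c := by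
  simp only [mean, sum_mul, mul_assoc]

theorem mean_sum {ι : Type*} (w : Ω → ℝ) (s : Finset ι) (X : ι → Ω → ℝ) :
    mean w (fun a => ∑ i ∈ s, X i a) = ∑ i ∈ s, mean w (X i) := by
  simp only [mean, mul_sum]
  exact sum_comm

theorem mean_mono (hw : ∀ a, 0 ≤ w a) (h : ∀ a, X a ≤ Y a) : mean w X ≤ mean w Y :=
  sum_le_sum fun a _ => mul_le_mul_of_nonneg_left (h a) (hw a)

theorem abs_mean_le (hw : IsPMF w) (hX : ∀ a, |X a| ≤ c) : |mean w X| ≤ c := by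
  rw [abs_le]
  constructor
  · simpa only [mean_const hw] using mean_mono hw.1 fun a => (abs_le.mp (hX a)).1
  · simpa only [mean_const hw] using mean_mono hw.1 fun a => (abs_le.mp (hX a)).2

theorem prob_mono {E F : Ω → Prop} [DecidablePred E] [DecidablePred F] (hw : ∀ a, 0 ≤ w a)
    (h : ∀ a, E a → F a) : prob w E ≤ prob w F :=
  mean_mono hw fun a => by
    by_cases hE : E a
    · rw [if_pos hE, if_pos (h a hE)]
    · rw [if_neg hE]
      positivity

theorem prob_eq_one {E : Ω → Prop} [DecidablePred E] (hw : IsPMF w) (h : ∀ a, E a) :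
    prob w E = 1 := by
  simp only [prob, h, if_true, mean_const hw]

theorem one_sub_mean_div_le_prob_le (hw : IsPMF w) (hX : ∀ a, 0 ≤ X a) (hc : 0 < c) :
    1 - mean w X / c ≤ prob w fun a => X a ≤ c := by
  calc 1 - mean w X / c = mean w fun a => 1 - X a * c⁻¹ := by
        rw [mean_sub, mean_const hw, mean_mul_const, div_eq_mul_inv]
    _ ≤ prob w fun a => X a ≤ c := mean_mono hw.1 fun a => by
        split_ifs with h
        · exact sub_le_self _ (mul_nonneg (hX a) (inv_nonneg.mpr hc.le))
        · rw [sub_nonpos, ← div_eq_mul_inv, one_le_div hc]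
          exact (not_le.mp h).le

theorem mean_prodLaw (v : Ω → ℝ) (w : Ω' → ℝ) (X : Ω × Ω' → ℝ) :
    mean (prodLaw v w) X = mean v fun s => mean w fun t => X (s, t) := by
  simp only [mean, prodLaw, Fintype.sum_prod_type, mul_sum, mul_assoc]

theorem mean_mapLaw [DecidableEq Ω'] (w : Ω → ℝ) (T : Ω → Ω') (X : Ω' → ℝ) :
    mean (mapLaw w T) X = mean w fun a => X (T a) := by
  simp only [mean, mapLaw, sum_mul]
  rw [sum_comm]
  simp only [ite_mul, zero_mul, sum_ite_eq, mem_univ, if_true]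

theorem cov_mapLaw [DecidableEq Ω'] (w : Ω → ℝ) (T : Ω → Ω') (X Y : Ω' → ℝ) :
    cov (mapLaw w T) X Y = cov w (fun a => X (T a)) fun a => Y (T a) := by
  simp only [cov, mean_mapLaw]

theorem cov_prodLaw (v : Ω → ℝ) (w : Ω' → ℝ) (X Y : Ω × Ω' → ℝ) :
    cov (prodLaw v w) X Y =
      mean v (fun s => cov w (fun t => X (s, t)) fun t => Y (s, t)) +
        cov v (fun s => mean w fun t => X (s, t)) fun s => mean w fun t => Y (s, t) := by
  simp only [cov, mean_prodLaw, mean_sub]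
  ring

theorem cov_prodLaw_fst_snd {v : Ω → ℝ} {w : Ω' → ℝ} (hv : IsPMF v) (hw : IsPMF w)
    (X : Ω → ℝ) (Y : Ω' → ℝ) :
    cov (prodLaw v w) (fun z => X z.1) (fun z => Y z.2) = 0 := by
  have hXY (s : Ω) : mean w (fun t => X s * Y t) = X s * mean w Y := by
    simp only [mul_comm (X s), mean_mul_const]
  simp only [cov, mean_prodLaw, mean_const hv, mean_const hw, hXY, mean_mul_const, sub_self]

namespace IsPMF

protected theorem nonempty (hw : IsPMF w) : Nonempty Ω := by
  by_contra h
  rw [not_nonempty_iff] at h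
  simpa using hw.2

protected theorem prodLaw {v : Ω → ℝ} {w : Ω' → ℝ} (hv : IsPMF v) (hw : IsPMF w) :
    IsPMF (prodLaw v w) :=
  ⟨fun z => mul_nonneg (hv.1 z.1) (hw.1 z.2), by
    simp only [prodLaw, Fintype.sum_prod_type, ← mul_sum, hw.2, mul_one, hv.2]⟩

protected theorem mapLaw [DecidableEq Ω'] (hw : IsPMF w) (T : Ω → Ω') : IsPMF (mapLaw w T) := by
  refine ⟨fun y => sum_nonneg fun x _ => ?_, ?_⟩
  · exact ite_nonneg (hw.1 x) le_rfl
  · simpa only [mean, mul_one, hw.2] using mean_mapLaw w T fun _ => 1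

end IsPMF

end Mean

section PairPow

variable {α β : Type*} [Fintype α] [Fintype β]

/-- The law of the sequences `(x, y)` when the pairs `(x i, y i)` are i.i.d. with law `w`. -/
def pairPow (w : α × β → ℝ) (ι : Type*) [Fintype ι] : (ι → α) × (ι → β) → ℝ :=
  fun z => ∏ i, w (z.1 i, z.2 i)

/-- The joint law `w` has Hirschfeld–Gebelein–Rényi maximal correlation at most `ρ`. Bounding the
covariance by the arithmetic rather than the geometric mean of the variances keeps the condition
free of square roots; the two forms are equivalent, by rescaling `f` and `g`. -/
def MaxCorrLE (w : α × β → ℝ) (ρ : ℝ) : Prop :=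
  ∀ (f : α → ℝ) (g : β → ℝ),
    cov w (fun z => f z.1) (fun z => g z.2) ≤
      ρ / 2 * (cov w (fun z => f z.1) (fun z => f z.1) + cov w (fun z => g z.2) fun z => g z.2)

theorem mean_pairPow_prod {ι : Type*} [Fintype ι] [DecidableEq ι] (w : α × β → ℝ)
    (X : ι → α × β → ℝ) :
    mean (pairPow w ι) (fun z => ∏ i, X i (z.1 i, z.2 i)) = ∏ i, mean w (X i) := by
  simp only [mean, pairPow, ← prod_mul_distrib]
  rw [prod_univ_sum, Fintype.piFinset_univ,
    ← (Equiv.arrowProdEquivProdArrow ι (fun _ => α) fun _ => β).sum_comp]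
  rfl

protected theorem IsPMF.pairPow {ι : Type*} [Fintype ι] [DecidableEq ι] {w : α × β → ℝ}
    (hw : IsPMF w) : IsPMF (pairPow w ι) :=
  ⟨fun _ => prod_nonneg fun _ _ => hw.1 _, by
    simpa only [mean, prod_const_one, mul_one, hw.2] using
      mean_pairPow_prod w fun (_ : ι) _ => (1 : ℝ)⟩

theorem mean_pairPow_succ (w : α × β → ℝ) (n : ℕ)
    (X : (Fin (n + 1) → α) × (Fin (n + 1) → β) → ℝ) :
    mean (pairPow w (Fin (n + 1))) X =
      mean (prodLaw w (pairPow w (Fin n))) fun z =>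
        X (Fin.cons z.1.1 z.2.1, Fin.cons z.1.2 z.2.2) := by
  let e := (Equiv.prodProdProdComm α β (Fin n → α) (Fin n → β)).trans
    ((Fin.consEquiv fun _ => α).prodCongr (Fin.consEquiv fun _ => β))
  rw [mean, ← e.sum_comp]
  refine sum_congr rfl fun z _ => ?_
  congr 1
  exact Fin.prod_univ_succ _

theorem cov_pairPow_succ (w : α × β → ℝ) (n : ℕ)
    (X Y : (Fin (n + 1) → α) × (Fin (n + 1) → β) → ℝ) :
    cov (pairPow w (Fin (n + 1))) X Y =
      cov (prodLaw w (pairPow w (Fin n)))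
        (fun z => X (Fin.cons z.1.1 z.2.1, Fin.cons z.1.2 z.2.2))
        fun z => Y (Fin.cons z.1.1 z.2.1, Fin.cons z.1.2 z.2.2) := by
  simp only [cov, mean_pairPow_succ]

protected theorem MaxCorrLE.pairPow {w : α × β → ℝ} {ρ : ℝ} (hw : ∀ z, 0 ≤ w z) (h : MaxCorrLE w ρ)
    (n : ℕ) : MaxCorrLE (pairPow w (Fin n)) ρ := by
  induction n with
  | zero =>
    intro f g
    simp [cov, mean, pairPow, Fintype.sum_prod_type]
  | succ n ih =>
    intro f g
    let f₀ (x : α) (u : Fin n → α) := f (Fin.cons x u)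
    let g₀ (y : β) (v : Fin n → β) := g (Fin.cons y v)
    have hwithin := mean_mono hw fun s : α × β => ih (f₀ s.1) (g₀ s.2)
    have hbetween := h (fun x => mean (pairPow w (Fin n)) fun z => f₀ x z.1)
      fun y => mean (pairPow w (Fin n)) fun z => g₀ y z.2
    simp only [mul_comm (ρ / 2), mean_mul_const, mean_add] at hwithin hbetween
    simp only [cov_pairPow_succ, cov_prodLaw]
    linarith

end PairPow

section Concentration

variable {Ω : Type*} [Fintype Ω]

theorem mean_le_klDiv_add_log_mean_exp {P Q : Ω → ℝ} (hP : IsPMF P) (hQ : ∀ a, 0 < Q a)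
    (X : Ω → ℝ) :
    mean P X ≤ Real.log 2 * klDiv P Q + Real.log (mean Q fun a => Real.exp (X a)) := by
  have := hP.nonempty
  set Z := mean Q fun a => Real.exp (X a) with hZ_def
  have hZ : 0 < Z := sum_pos (fun a _ => mul_pos (hQ a) (Real.exp_pos _)) univ_nonempty
  have hkl : Real.log 2 * klDiv P Q = mean P fun a => Real.log (P a / Q a) := by
    have h2 : Real.log 2 ≠ 0 := (Real.log_pos one_lt_two).ne'
    rw [klDiv, mul_sum]
    refine sum_congr rfl fun a _ => ?_
    rw [Real.logb]
    field_simp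
  -- The tilted weights `Q a * exp (X a) / Z` form a pmf; `t + 1 ≤ exp t` compares `P` with it.
  have hpt (a : Ω) : P a * (X a - Real.log (P a / Q a) - Real.log Z) ≤
      Q a * Real.exp (X a) / Z - P a := by
    rcases (hP.1 a).eq_or_lt with h0 | h0
    · rw [← h0, zero_mul, sub_zero]
      exact div_nonneg (mul_pos (hQ a) (Real.exp_pos _)).le hZ.le
    · have htilt : P a * Real.exp (X a - Real.log (P a / Q a) - Real.log Z) =
          Q a * Real.exp (X a) / Z := by
        rw [Real.exp_sub, Real.exp_sub, Real.exp_log (div_pos h0 (hQ a)), Real.exp_log hZ]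
        field_simp
      rw [← htilt, ← mul_sub_one]
      exact mul_le_mul_of_nonneg_left (le_sub_iff_add_le.mpr (Real.add_one_le_exp _)) h0.le
  have hsum : mean P (fun a => X a - Real.log (P a / Q a) - Real.log Z) ≤ 0 :=
    calc _ ≤ ∑ a, (Q a * Real.exp (X a) / Z - P a) := sum_le_sum fun a _ => hpt a
      _ = 0 := by rw [sum_sub_distrib, ← sum_div, hP.2, ← mean, ← hZ_def, div_self hZ.ne', sub_self]
  rw [mean_sub, mean_sub, mean_const hP, ← hkl] at hsum
  linarith

theorem exp_mul_le_cosh_add_sinh {x c : ℝ} (hx : |x| ≤ c) (t : ℝ) :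
    Real.exp (t * x) ≤ Real.cosh (t * c) + x * (Real.sinh (t * c) / c) := by
  obtain ⟨hl, hr⟩ := abs_le.mp hx
  rcases ((abs_nonneg x).trans hx).eq_or_lt with rfl | hc
  · simp [abs_nonpos_iff.mp hx]
  have hconv := convexOn_exp.2 (Set.mem_univ (t * c)) (Set.mem_univ (-(t * c)))
    (div_nonneg (by linarith : 0 ≤ c + x) (by linarith : 0 ≤ 2 * c))
    (div_nonneg (by linarith : 0 ≤ c - x) (by linarith : 0 ≤ 2 * c)) (by field_simp; ring)
  simp only [smul_eq_mul] at hconv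
  calc Real.exp (t * x)
      = Real.exp ((c + x) / (2 * c) * (t * c) + (c - x) / (2 * c) * -(t * c)) := by
        congr 1; field_simp; ring
    _ ≤ _ := hconv
    _ = _ := by rw [Real.cosh_eq, Real.sinh_eq]; field_simp; ring

theorem mean_exp_mul_le {Q X : Ω → ℝ} {c : ℝ} (hQ : IsPMF Q) (hX : mean Q X = 0)
    (hc : ∀ a, |X a| ≤ c) (t : ℝ) :
    mean Q (fun a => Real.exp (t * X a)) ≤ Real.exp ((t * c) ^ 2 / 2) :=
  calc mean Q (fun a => Real.exp (t * X a))
      ≤ mean Q fun a => Real.cosh (t * c) + X a * (Real.sinh (t * c) / c) :=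
        mean_mono hQ.1 fun a => exp_mul_le_cosh_add_sinh (hc a) t
    _ = Real.cosh (t * c) := by rw [mean_add, mean_const hQ, mean_mul_const, hX, zero_mul, add_zero]
    _ ≤ Real.exp ((t * c) ^ 2 / 2) := Real.cosh_le_exp_half_sq _

theorem sq_mean_sum_le_klDiv {α β ι : Type*} [Fintype α] [Fintype β] [Fintype ι] [DecidableEq ι]
    {q : α × β → ℝ} (hq : IsPMF q) (hq_pos : ∀ z, 0 < q z)
    {P : (ι → α) × (ι → β) → ℝ} (hP : IsPMF P) {X : ι → α × β → ℝ} {c : ι → ℝ}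
    (hX : ∀ i, mean q (X i) = 0) (hc : ∀ i z, |X i z| ≤ c i) :
    mean P (fun z => ∑ i, X i (z.1 i, z.2 i)) ^ 2 ≤
      2 * (∑ i, c i ^ 2) * (Real.log 2 * klDiv P (pairPow q ι)) := by
  have hmgf (t : ℝ) : mean (pairPow q ι)
      (fun z => Real.exp (t * ∑ i, X i (z.1 i, z.2 i))) ≤
        Real.exp (t ^ 2 * (∑ i, c i ^ 2) / 2) :=
    calc _ = ∏ i, mean q fun z => Real.exp (t * X i z) := by
          simp only [mul_sum, Real.exp_sum]
          exact mean_pairPow_prod q fun i z => Real.exp (t * X i z)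
      _ ≤ ∏ i, Real.exp ((t * c i) ^ 2 / 2) :=
          prod_le_prod (fun i _ => sum_nonneg fun z _ => mul_nonneg (hq.1 z) (Real.exp_pos _).le)
            fun i _ => mean_exp_mul_le hq (hX i) (hc i) t
      _ = Real.exp (t ^ 2 * (∑ i, c i ^ 2) / 2) := by
          simp only [← Real.exp_sum, mul_pow, mul_sum, sum_div]
  have hquad (t : ℝ) : 0 ≤ (∑ i, c i ^ 2) / 2 * (t * t) +
      -mean P (fun z => ∑ i, X i (z.1 i, z.2 i)) * t +
        Real.log 2 * klDiv P (pairPow q ι) := by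
    have hpos (z) : 0 < pairPow q ι z := prod_pos fun i _ => hq_pos _
    have hdv := mean_le_klDiv_add_log_mean_exp hP hpos fun z => t * ∑ i, X i (z.1 i, z.2 i)
    have := hP.nonempty
    have hlog := (Real.log_le_iff_le_exp (sum_pos
      (fun z _ => mul_pos (hpos z) (Real.exp_pos _)) univ_nonempty)).mpr (hmgf t)
    simp only [mul_comm t, mean_mul_const] at hdv hlog
    simp only [mean] at hdv hlog ⊢
    linarith
  have hdiscrim := discrim_le_zero hquad
  rw [discrim] at hdiscrim
  linarith

end Concentration

section Spin

variable {α β : Type*} [Fintype α] [Fintype β] {w : α × β → ℝ} {ρ p : ℝ}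

/-- The spin of a bit, identifying `Bool` with `{-1, 1}`. -/
def spin (b : Bool) : ℝ := if b then 1 else -1

theorem spin_mul_self (b : Bool) : spin b * spin b = 1 := by
  cases b <;> simp [spin]

theorem abs_spin (b : Bool) : |spin b| = 1 := by
  cases b <;> simp [spin]

theorem ite_ne_eq_spin (x y : Bool) :
    (if x ≠ y then (1 : ℝ) else 0) = (1 - spin x * spin y) * 2⁻¹ := by
  cases x <;> cases y <;> norm_num [spin]

/-- The covariance of the spins of the bits `f u` and `g v` when `(u, v)` has law `w`. -/
noncomputable def spinCov (w : α × β → ℝ) (f : α → Bool) (g : β → Bool) : ℝ :=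
  cov w (fun z => spin (f z.1)) fun z => spin (g z.2)

/-- The total amount by which the covariances of the spins of `f u i` and `g v i` fall short of `ρ`
when `(u, v)` has law `w`. -/
noncomputable def covDeficit {ι : Type*} [Fintype ι] (w : α × β → ℝ) (ρ : ℝ) (f : α → ι → Bool)
    (g : β → ι → Bool) : ℝ :=
  ∑ i, (ρ - spinCov w (fun u => f u i) fun v => g v i)

theorem MaxCorrLE.mul_sq_mean_add_sq_mean_le (hw : IsPMF w) (h : MaxCorrLE w ρ)
    (f : α → Bool) (g : β → Bool) :
    ρ / 2 * (mean w (fun z => spin (f z.1)) ^ 2 + mean w (fun z => spin (g z.2)) ^ 2) ≤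
      ρ - spinCov w f g := by
  have hcov := h (fun u => spin (f u)) fun v => spin (g v)
  change spinCov w f g ≤ _ at hcov
  simp only [cov, spin_mul_self, mean_const hw] at hcov
  linarith

theorem MaxCorrLE.spinCov_le (hρ : 0 ≤ ρ) (hw : IsPMF w) (h : MaxCorrLE w ρ)
    (f : α → Bool) (g : β → Bool) : spinCov w f g ≤ ρ :=
  sub_nonneg.mp <| (by positivity : (0 : ℝ) ≤ _).trans (h.mul_sq_mean_add_sq_mean_le hw f g)

theorem prob_ne_eq_one_sub_mean_spin_mul_spin (hw : IsPMF w) (f : α → Bool) (g : β → Bool) :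
    prob w (fun z => f z.1 ≠ g z.2) = (1 - mean w fun z => spin (f z.1) * spin (g z.2)) / 2 := by
  simp only [prob, ite_ne_eq_spin, mean_mul_const, mean_sub, mean_const hw, div_eq_mul_inv]

theorem MaxCorrLE.prob_ne_le (hp0 : 0 ≤ p) (hp : p < 1 / 2) (hw : IsPMF w)
    (h : MaxCorrLE w (1 - 2 * p)) (f : α → Bool) (g : β → Bool) :
    prob w (fun z => f z.1 ≠ g z.2) ≤ p + (1 - 2 * p - spinCov w f g) / (1 - 2 * p) := by
  have hρ : 0 < 1 - 2 * p := by linarith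
  set μ := mean w fun z => spin (f z.1)
  set ν := mean w fun z => spin (g z.2)
  set Δ := 1 - 2 * p - spinCov w f g with hΔ
  have hsq : (1 - 2 * p) / 2 * (μ ^ 2 + ν ^ 2) ≤ Δ := h.mul_sq_mean_add_sq_mean_le hw f g
  have hμν : -(μ * ν) ≤ Δ / (1 - 2 * p) := by
    rw [le_div_iff₀ hρ]
    linarith [mul_nonneg hρ.le (sq_nonneg (μ + ν))]
  have hΔ_le : Δ ≤ Δ / (1 - 2 * p) :=
    le_div_self (le_trans (by positivity) hsq) hρ (by linarith)
  have hspin : mean w (fun z => spin (f z.1) * spin (g z.2)) = 1 - 2 * p - Δ + μ * ν := by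
    simp only [hΔ, spinCov, cov, μ, ν]
    ring
  rw [prob_ne_eq_one_sub_mean_spin_mul_spin hw, hspin]
  linarith

variable {ι : Type*} [Fintype ι]

theorem MaxCorrLE.covDeficit_nonneg (hρ : 0 ≤ ρ) (hw : IsPMF w) (h : MaxCorrLE w ρ)
    (f : α → ι → Bool) (g : β → ι → Bool) : 0 ≤ covDeficit w ρ f g :=
  sum_nonneg fun _ _ => sub_nonneg.mpr (h.spinCov_le hρ hw _ _)

theorem MaxCorrLE.average_prob_ne_le [Nonempty ι] (hp0 : 0 ≤ p) (hp : p < 1 / 2) (hw : IsPMF w)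
    (h : MaxCorrLE w (1 - 2 * p)) (f : α → ι → Bool) (g : β → ι → Bool) :
    1 / (Fintype.card ι : ℝ) * ∑ i, prob w (fun z => f z.1 i ≠ g z.2 i) ≤
      p + covDeficit w (1 - 2 * p) f g / Fintype.card ι / (1 - 2 * p) :=
  calc _ ≤ 1 / (Fintype.card ι : ℝ) *
        ∑ i, (p + (1 - 2 * p - spinCov w (fun u => f u i) fun v => g v i) / (1 - 2 * p)) := by
        gcongr
        exact h.prob_ne_le hp0 hp hw (fun u => f u _) fun v => g v _
    _ = _ := by
        rw [sum_add_distrib, sum_const, card_univ, nsmul_eq_mul, ← sum_div, ← covDeficit]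
        field_simp

end Spin

section DSBS

variable {p : ℝ}

theorem dsbsPair_pos (hp0 : 0 < p) (hp1 : p < 1) (z : Bool × Bool) : 0 < dsbsPair p z := by
  unfold dsbsPair
  split_ifs <;> linarith

theorem mean_dsbsPair (p : ℝ) (X : Bool × Bool → ℝ) :
    mean (dsbsPair p) X =
      (1 - p) / 2 * (X (true, true) + X (false, false)) +
        p / 2 * (X (true, false) + X (false, true)) := by
  simp only [mean, dsbsPair, Fintype.sum_prod_type, Fintype.sum_bool, if_true, Bool.true_eq_false,
    Bool.false_eq_true, if_false]
  ring

theorem isPMF_dsbsPair (hp0 : 0 ≤ p) (hp1 : p ≤ 1) : IsPMF (dsbsPair p) := by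
  constructor
  · intro z
    unfold dsbsPair
    split_ifs <;> linarith
  · have hone := mean_dsbsPair p fun _ => 1
    simp only [mean, mul_one] at hone
    rw [hone]
    ring

theorem maxCorrLE_dsbsPair (hp : p ≤ 1 / 2) : MaxCorrLE (dsbsPair p) (1 - 2 * p) := by
  intro f g
  simp only [cov, mean_dsbsPair]
  have hρ : 0 ≤ 1 - 2 * p := by linarith
  linarith [mul_nonneg hρ (sq_nonneg (f true - f false - (g true - g false)))]

theorem covDeficit_id_le {ι : Type*} [Fintype ι] [DecidableEq ι] (hp0 : 0 < p)
    (hp : p < 1 / 2) {P : (ι → Bool) × (ι → Bool) → ℝ} (hP : IsPMF P) {ε : ℝ} (hε : 0 ≤ ε)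
    (hkl : klDiv P (pairPow (dsbsPair p) ι) ≤ ε) :
    covDeficit P (1 - 2 * p) id id ≤ 4 * √(Fintype.card ι * ε) := by
  let ν (i : ι) : ℝ := mean P fun z => spin (z.2 i)
  have hν (i : ι) : |ν i| ≤ 1 := abs_mean_le hP fun z => (abs_spin _).le
  -- Centring the second coordinate at its mean under `P` turns the mean of `X i` under `P`
  -- into the covariance deficit, while `X i` stays centred under `DSBS(p)`.
  let X (i : ι) (z : Bool × Bool) : ℝ := 1 - 2 * p - spin z.1 * spin z.2 + spin z.1 * ν i
  have hX_mean (i : ι) : mean (dsbsPair p) (X i) = 0 := by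
    simp only [mean_dsbsPair, X, spin, if_true, Bool.false_eq_true, if_false]
    ring
  have hX_abs (i : ι) (z : Bool × Bool) : |X i z| ≤ 3 :=
    calc |X i z| ≤ |1 - 2 * p| + |spin z.1 * spin z.2| + |spin z.1 * ν i| :=
          (abs_add_le _ _).trans (add_le_add_left (abs_sub _ _) _)
      _ ≤ 1 + 1 + 1 := by
          rw [abs_mul, abs_mul, abs_spin, abs_spin, one_mul, one_mul]
          exact add_le_add (add_le_add (abs_le.mpr ⟨by linarith, by linarith⟩) le_rfl) (hν i)
      _ = 3 := by norm_num
  have hdeficit :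
      covDeficit P (1 - 2 * p) id id = mean P fun z => ∑ i, X i (z.1 i, z.2 i) := by
    simp only [covDeficit, id_eq, spinCov, cov, X, mean_sum, mean_add, mean_sub, mean_const hP,
      mean_mul_const, ν]
    exact sum_congr rfl fun i _ => by ring
  have hsq := sq_mean_sum_le_klDiv (isPMF_dsbsPair hp0.le (by linarith))
    (dsbsPair_pos hp0 (by linarith)) hP hX_mean hX_abs
  rw [sum_const, card_univ, nsmul_eq_mul] at hsq
  have hlog : Real.log 2 * klDiv P (pairPow (dsbsPair p) ι) ≤ 8 / 9 * ε :=
    calc _ ≤ Real.log 2 * ε := mul_le_mul_of_nonneg_left hkl (Real.log_pos one_lt_two).le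
      _ ≤ 8 / 9 * ε := mul_le_mul_of_nonneg_right (by linarith [Real.log_two_lt_d9]) hε
  rw [hdeficit]
  refine le_of_abs_le (abs_le_of_sq_le_sq (hsq.trans ?_) (by positivity))
  rw [mul_pow, Real.sq_sqrt (by positivity)]
  linarith [mul_le_mul_of_nonneg_left hlog (Nat.cast_nonneg (α := ℝ) (Fintype.card ι))]

end DSBS

section Simulation

variable {α β A B : Type*} [Fintype α] [Fintype β] [Fintype A] [Fintype B]
  {w : α × β → ℝ} {pA : A → ℝ} {pB : B → ℝ} {p : ℝ}

/-- The law of `(F U a, G V b)` when `a`, `b` and `(U, V)` are independent with laws `pA`, `pB`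
and `w`: two parties observing `U` and `V` simulate a joint law using local randomness. -/
noncomputable def simulatedLaw {S T : Type*} [DecidableEq S] [DecidableEq T]
    (pA : A → ℝ) (pB : B → ℝ) (w : α × β → ℝ) (F : α → A → S) (G : β → B → T) (xy : S × T) : ℝ :=
  ∑ a, ∑ b, ∑ u, ∑ v, pA a * pB b * w (u, v) *
    (if F u a = xy.1 then 1 else 0) * (if G v b = xy.2 then 1 else 0)

theorem simulatedLaw_eq_mapLaw {S T : Type*} [DecidableEq S] [DecidableEq T]
    (pA : A → ℝ) (pB : B → ℝ) (w : α × β → ℝ) (F : α → A → S) (G : β → B → T) :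
    simulatedLaw pA pB w F G =
      mapLaw (prodLaw (prodLaw pA pB) w) fun z => (F z.2.1 z.1.1, G z.2.2 z.1.2) := by
  funext xy
  simp only [simulatedLaw, mapLaw, prodLaw, Fintype.sum_prod_type, Prod.ext_iff, mul_ite, mul_one,
    mul_zero, ← ite_and, and_comm]

protected theorem IsPMF.simulatedLaw {S T : Type*} [Fintype S] [Fintype T] [DecidableEq S]
    [DecidableEq T] (hA : IsPMF pA) (hB : IsPMF pB) (hw : IsPMF w) (F : α → A → S) (G : β → B → T) :
    IsPMF (simulatedLaw pA pB w F G) := by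
  rw [simulatedLaw_eq_mapLaw]
  exact ((hA.prodLaw hB).prodLaw hw).mapLaw _

variable {ι : Type*} [Fintype ι] [DecidableEq ι]

theorem spinCov_simulatedLaw (hA : IsPMF pA) (hB : IsPMF pB)
    (F : α → A → ι → Bool) (G : β → B → ι → Bool) (i : ι) :
    spinCov (simulatedLaw pA pB w F G) (fun x => x i) (fun y => y i) =
      mean (prodLaw pA pB) fun ab => spinCov w (fun u => F u ab.1 i) fun v => G v ab.2 i := by
  have hindep := cov_prodLaw_fst_snd hA hB (fun a => mean w fun z => spin (F z.1 a i))
    fun b => mean w fun z => spin (G z.2 b i)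
  rw [spinCov, simulatedLaw_eq_mapLaw, cov_mapLaw, cov_prodLaw, hindep, add_zero]
  rfl

theorem mean_covDeficit (hA : IsPMF pA) (hB : IsPMF pB) (w : α × β → ℝ) (ρ : ℝ)
    (F : α → A → ι → Bool) (G : β → B → ι → Bool) :
    mean (prodLaw pA pB) (fun ab => covDeficit w ρ (fun u => F u ab.1) fun v => G v ab.2) =
      covDeficit (simulatedLaw pA pB w F G) ρ id id := by
  simp only [covDeficit, id_eq, spinCov_simulatedLaw hA hB, mean_sum, mean_sub,
    mean_const (hA.prodLaw hB)]

theorem stmt15_general (hp0 : 0 < p) (hp : p < 1 / 2) (hw : IsPMF w)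
    (hcorr : MaxCorrLE w (1 - 2 * p)) (hA : IsPMF pA) (hB : IsPMF pB)
    (F : α → A → ι → Bool) (G : β → B → ι → Bool) {ε : ℝ} (hε : 0 < ε)
    (hkl : klDiv (simulatedLaw pA pB w F G) (pairPow (dsbsPair p) ι) ≤ ε) :
    1 - 4 * (Fintype.card ι * ε) ^ ((1 : ℝ) / 4) ≤
      prob (prodLaw pA pB) fun ab =>
        1 / (Fintype.card ι : ℝ) * ∑ i, prob w (fun z => F z.1 ab.1 i ≠ G z.2 ab.2 i) ≤
          p + ε ^ ((1 : ℝ) / 4) * (Fintype.card ι : ℝ) ^ (-(3 : ℝ) / 4) / (1 - 2 * p) := by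
  have hAB := hA.prodLaw hB
  have hρ : 0 < 1 - 2 * p := by linarith
  rcases isEmpty_or_nonempty ι with hι | hι
  · rw [prob_eq_one hAB fun ab => by simp only [univ_eq_empty, sum_empty, mul_zero]; positivity]
    exact sub_le_self _ (by positivity)
  have hn : (0 : ℝ) < Fintype.card ι := Nat.cast_pos.mpr Fintype.card_pos
  let D (ab : A × B) : ℝ := covDeficit w (1 - 2 * p) (fun u => F u ab.1) fun v => G v ab.2
  have hD (ab : A × B) : 0 ≤ D ab := hcorr.covDeficit_nonneg hρ.le hw _ _
  set q := (Fintype.card ι * ε) ^ ((1 : ℝ) / 4) with hq_def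
  have hq : 0 < q := by positivity
  have hmean : mean (prodLaw pA pB) D ≤ 4 * q ^ 2 := by
    rw [hq_def, ← sqrt_eq_rpow_quarter_sq (by positivity), mean_covDeficit hA hB]
    exact covDeficit_id_le hp0 hp (hA.simulatedLaw hB hw F G) hε.le hkl
  calc 1 - 4 * q ≤ 1 - mean (prodLaw pA pB) D / q := by
        rw [sub_le_sub_iff_left, div_le_iff₀ hq]
        linarith
    _ ≤ prob (prodLaw pA pB) fun ab => D ab ≤ q := one_sub_mean_div_le_prob_le hAB hD hq
    _ ≤ _ := prob_mono hAB.1 fun ab hab => by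
        rw [rpow_quarter_mul_rpow_neg_three_quarters hn hε.le]
        have havg := hcorr.average_prob_ne_le hp0.le hp hw (fun u => F u ab.1) fun v => G v ab.2
        exact havg.trans (by gcongr)

end Simulation

/-- Lemma 10 of the paper: for a randomized simulation
`X_i = f_i(U^n, A)`, `Y_i = g_i(V^n, B)` of `DSBS(p)` within KL divergence `ε`, with
probability at least `1 - C₂(nε)^{1/4}` over the local randomness `(A,B)`, the average
conditional disagreement probability is at most `p + C₁ ε^{1/4} n^{-3/4}/(1-2p)`. -/
theorem stmt15 (p : ℝ) (hp0 : 0 < p) (hp : p < 1 / 2) :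
    ∃ C₁ > (0:ℝ), ∃ C₂ > (0:ℝ),
      ∀ (n : ℕ) (ε : ℝ), 0 < ε →
      ∀ (A B : Type) [Fintype A] [Fintype B],
      ∀ (pA : A → ℝ) (pB : B → ℝ), IsPMF pA → IsPMF pB →
      ∀ (f : Fin n → (Fin n → Bool) → A → Bool)
        (g : Fin n → (Fin n → Bool) → B → Bool),
      klDiv
        (fun xy : (Fin n → Bool) × (Fin n → Bool) =>
          ∑ a, ∑ b, ∑ u : Fin n → Bool, ∑ v : Fin n → Bool,
            pA a * pB b * (∏ i, dsbsPair p (u i, v i)) *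
              (if (fun i => f i u a) = xy.1 then (1:ℝ) else 0) *
              (if (fun i => g i v b) = xy.2 then (1:ℝ) else 0))
        (fun xy => ∏ i, dsbsPair p (xy.1 i, xy.2 i)) ≤ ε →
      (∑ a, ∑ b, pA a * pB b *
          (if (1 / (n:ℝ)) * (∑ i : Fin n, ∑ u : Fin n → Bool, ∑ v : Fin n → Bool,
                (∏ j, dsbsPair p (u j, v j)) * (if f i u a ≠ g i v b then (1:ℝ) else 0))
              ≤ p + C₁ * ε ^ ((1:ℝ)/4) * (n:ℝ) ^ (-(3:ℝ)/4) / (1 - 2*p)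
           then (1:ℝ) else 0))
        ≥ 1 - C₂ * ((n:ℝ) * ε) ^ ((1:ℝ)/4) := by
  have hd : IsPMF (dsbsPair p) := isPMF_dsbsPair hp0.le (by linarith)
  refine ⟨1, one_pos, 4, four_pos, fun n ε hε A B _ _ pA pB hA hB f g hkl => ?_⟩
  simpa only [prob, mean, prodLaw, pairPow, Fintype.sum_prod_type, Fintype.card_fin, one_mul]
    using stmt15_general hp0 hp hd.pairPow ((maxCorrLE_dsbsPair hp.le).pairPow hd.1 n) hA hB
      (fun u a i => f i u a) (fun v b i => g i v b) hε hkl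
end
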